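/- Let g : S → ℂ be a solution of d'Alembert's functional equation g(xy) + g(xτ(y)) = 2 g(x) g(y) for all x, y ∈ S. Then the following three properties are equivalent: (i) Σ_{i∈I} c_i g(x z_i) = Σ_{i∈I} c_i g(x τ(z_i)) for all x ∈ S; (ii) Σ_{i∈I} c_i g(x z_i) = g(x) · Σ_{i∈I} c_i g(z_i) for all x ∈ S; (iii) Σ_{i∈I} Σ_{j∈I} c_i c_j g(z_i z_j) = (Σ_{i∈I} c_i g(z_i))². -/

import Mathlib

/-!
Let `D(x, y) = g(xy) - g(x)g(y)`. For central `z`, expanding `g(xτ(zy))` once with `zy` as a single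
argument and once through `τ(zy) = τ(y)τ(z)` shows that `D(·, z)` satisfies the sine addition law
`f(xy) = g(x)f(y) + g(y)f(x)`. The law is linear in `f`, so `F(x) = ∫ D(x, t) dμ(t)` satisfies it as
well. Computing `f(x²y)` in two ways gives `f(x)D(x, y) = f(y)D(x, x)`, and integrating this
for `f = F` over `y` yields `F(x)² = (∫ F dμ) D(x, x)`. Property (ii) says `F = 0` and property
(iii) says `∫ F dμ = 0`, while (i) is equivalent to (ii) because `g(xt)` and `g(xτ(t))` have mean
`g(x)g(t)`.
-/

open Finset

section

variable {S R ι : Type*} [CommRing R]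

/-- `g` solves d'Alembert's functional equation with respect to the map `τ`. -/
def IsDAlembert [Mul S] (τ : S → S) (g : S → R) : Prop :=
  ∀ x y : S, g (x * y) + g (x * τ y) = 2 * g x * g y

/-- `f` satisfies the sine addition law `f(xy) = g(x)f(y) + g(y)f(x)`, in which `g` plays the role
of the cosine. -/
def SineAdditionLaw [Mul S] (g f : S → R) : Prop :=
  ∀ x y : S, f (x * y) = g x * f y + g y * f x

/-- The failure of `g` to be multiplicative at the pair `(x, y)`. -/
def mulDefect [Mul S] (g : S → R) (x y : S) : R :=
  g (x * y) - g x * g y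

/-- The integral over `y` of `mulDefect g x y` against the discrete measure with mass `c i` at
`z i` for `i ∈ I`. -/
def integralMulDefect [Mul S] (I : Finset ι) (c : ι → R) (z : ι → S) (g : S → R) (x : S) : R :=
  ∑ i ∈ I, c i * mulDefect g x (z i)

section Mul

variable [Mul S] {τ : S → S} {g : S → R}

theorem SineAdditionLaw.sum {F : ι → S → R} {I : Finset ι} (c : ι → R)
    (hF : ∀ i ∈ I, SineAdditionLaw g (F i)) :
    SineAdditionLaw g fun x => ∑ i ∈ I, c i * F i x := by
  intro x y
  simp only [mul_sum, ← sum_add_distrib]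
  refine sum_congr rfl fun i hi => ?_
  rw [hF i hi x y]
  ring

variable (I : Finset ι) (c : ι → R) (z : ι → S)

theorem integralMulDefect_eq (g : S → R) (x : S) :
    integralMulDefect I c z g x =
      (∑ i ∈ I, c i * g (x * z i)) - g x * ∑ i ∈ I, c i * g (z i) := by
  simp only [integralMulDefect, mulDefect, mul_sub, sum_sub_distrib, mul_sum, mul_left_comm]

theorem integralMulDefect_eq_zero_iff (g : S → R) (x : S) :
    integralMulDefect I c z g x = 0 ↔
      (∑ i ∈ I, c i * g (x * z i)) = g x * ∑ i ∈ I, c i * g (z i) := by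
  rw [integralMulDefect_eq, sub_eq_zero]

theorem sum_integralMulDefect (g : S → R) :
    (∑ i ∈ I, c i * integralMulDefect I c z g (z i)) =
      (∑ i ∈ I, ∑ j ∈ I, c i * c j * g (z i * z j)) - (∑ i ∈ I, c i * g (z i)) ^ 2 := by
  rw [sq, sum_mul, ← sum_sub_distrib]
  refine sum_congr rfl fun i _ => ?_
  simp only [integralMulDefect_eq, mul_sub, mul_sum, mul_assoc]

theorem IsDAlembert.sum_add_sum (hg : IsDAlembert τ g) (x : S) :
    (∑ i ∈ I, c i * g (x * z i)) + ∑ i ∈ I, c i * g (x * τ (z i)) =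
      2 * (g x * ∑ i ∈ I, c i * g (z i)) := by
  simp only [← sum_add_distrib, mul_sum]
  refine sum_congr rfl fun i _ => ?_
  linear_combination c i * hg x (z i)

theorem IsDAlembert.sum_eq_sum_iff (h2 : IsLeftRegular (2 : R)) (hg : IsDAlembert τ g) (x : S) :
    (∑ i ∈ I, c i * g (x * z i)) = (∑ i ∈ I, c i * g (x * τ (z i))) ↔
      (∑ i ∈ I, c i * g (x * z i)) = g x * ∑ i ∈ I, c i * g (z i) := by
  have mean := hg.sum_add_sum I c z x
  constructor <;> intro h
  · apply h2
    linear_combination mean + h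
  · linear_combination 2 * h - mean

end Mul

section Semigroup

variable [Semigroup S] {τ : S → S} {f g : S → R}

theorem SineAdditionLaw.mul_mulDefect (hf : SineAdditionLaw g f) (x y : S) :
    f x * mulDefect g x y = f y * mulDefect g x x := by
  have expand_left : f (x * x * y) = g (x * x) * f y + g y * (g x * f x + g x * f x) := by
    rw [hf, hf x x]
  have expand_right : f (x * x * y) = g x * (g x * f y + g y * f x) + g (x * y) * f x := by
    rw [mul_assoc, hf, hf x y]
  unfold mulDefect
  linear_combination expand_left - expand_right

theorem SineAdditionLaw.mul_integralMulDefect (hf : SineAdditionLaw g f) (I : Finset ι)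
    (c : ι → R) (z : ι → S) (x : S) :
    f x * integralMulDefect I c z g x = (∑ i ∈ I, c i * f (z i)) * mulDefect g x x := by
  simp only [integralMulDefect, mul_sum, sum_mul]
  refine sum_congr rfl fun i _ => ?_
  linear_combination c i * hf.mul_mulDefect x (z i)

theorem IsDAlembert.sineAdditionLaw_mulDefect (h2 : IsLeftRegular (2 : R))
    (hτ : ∀ x y, τ (x * y) = τ y * τ x) (hg : IsDAlembert τ g) {z : S}
    (hz : ∀ s, Commute z s) : SineAdditionLaw g fun x => mulDefect g x z := by
  intro x y
  have at_xy_z : g (x * τ (z * y)) = 2 * g x * g (y * z) - g (x * y * z) := by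
    rw [(hz y).eq, mul_assoc x, ← hg x (y * z), add_sub_cancel_left]
  have at_xτy_z : g (x * τ y * z) + g (x * τ (z * y)) = 2 * g (x * τ y) * g z := by
    rw [hτ, ← mul_assoc]
    exact hg (x * τ y) z
  have at_xz_y : g (x * y * z) + g (x * τ y * z) = 2 * g (x * z) * g y := by
    simpa only [mul_assoc, (hz _).eq] using hg (x * z) y
  have at_x_y := hg x y
  apply h2
  simp only [mulDefect]
  linear_combination at_xz_y - at_xτy_z + at_xy_z + (-2 * g z) * at_x_y

theorem IsDAlembert.sineAdditionLaw_integralMulDefect (h2 : IsLeftRegular (2 : R))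
    (hτ : ∀ x y, τ (x * y) = τ y * τ x) (hg : IsDAlembert τ g) {I : Finset ι} (c : ι → R)
    {z : ι → S} (hz : ∀ i ∈ I, ∀ s, Commute (z i) s) :
    SineAdditionLaw g (integralMulDefect I c z g) :=
  .sum c fun i hi => hg.sineAdditionLaw_mulDefect h2 hτ (hz i hi)

theorem SineAdditionLaw.forall_integralMulDefect_eq_zero_iff [IsReduced R] {I : Finset ι}
    {c : ι → R} {z : ι → S} (hF : SineAdditionLaw g (integralMulDefect I c z g)) :
    (∀ x, integralMulDefect I c z g x = 0) ↔
      ∑ i ∈ I, c i * integralMulDefect I c z g (z i) = 0 := by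
  refine ⟨fun h => by simp only [h, mul_zero, sum_const_zero], fun h x => ?_⟩
  have sq_eq_zero := hF.mul_integralMulDefect I c z x
  rw [h, zero_mul, ← sq] at sq_eq_zero
  exact eq_zero_of_pow_eq_zero sq_eq_zero

theorem stmt_16_general [IsReduced R] (h2 : IsLeftRegular (2 : R))
    (hτ : ∀ x y, τ (x * y) = τ y * τ x) (hg : IsDAlembert τ g) (I : Finset ι) (c : ι → R)
    (z : ι → S) (hz : ∀ i ∈ I, ∀ s, Commute (z i) s) :
    ((∀ x : S, (∑ i ∈ I, c i * g (x * z i)) = ∑ i ∈ I, c i * g (x * τ (z i))) ↔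
      (∀ x : S, (∑ i ∈ I, c i * g (x * z i)) = g x * ∑ i ∈ I, c i * g (z i))) ∧
    ((∀ x : S, (∑ i ∈ I, c i * g (x * z i)) = g x * ∑ i ∈ I, c i * g (z i)) ↔
      (∑ i ∈ I, ∑ j ∈ I, c i * c j * g (z i * z j)) = (∑ i ∈ I, c i * g (z i)) ^ 2) := by
  refine ⟨forall_congr' (hg.sum_eq_sum_iff I c z h2), ?_⟩
  have hF := hg.sineAdditionLaw_integralMulDefect h2 hτ c hz
  simpa only [sum_integralMulDefect, integralMulDefect_eq_zero_iff, sub_eq_zero] using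
    hF.forall_integralMulDefect_eq_zero_iff

end Semigroup

end

theorem stmt_16 {S ι : Type*} [Semigroup S] (τ : S → S)
    (hτmul : ∀ x y : S, τ (x * y) = τ y * τ x)
    (hτinv : ∀ x : S, τ (τ x) = x)
    (I : Finset ι) (c : ι → ℂ) (z : ι → S)
    (hz : ∀ i ∈ I, ∀ s : S, z i * s = s * z i)
    (g : S → ℂ)
    (hg : ∀ x y : S, g (x * y) + g (x * τ y) = 2 * g x * g y) :
    ((∀ x : S, (∑ i ∈ I, c i * g (x * z i)) = ∑ i ∈ I, c i * g (x * τ (z i))) ↔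
      (∀ x : S, (∑ i ∈ I, c i * g (x * z i)) = g x * ∑ i ∈ I, c i * g (z i))) ∧
    ((∀ x : S, (∑ i ∈ I, c i * g (x * z i)) = g x * ∑ i ∈ I, c i * g (z i)) ↔
      (∑ i ∈ I, ∑ j ∈ I, c i * c j * g (z i * z j)) = (∑ i ∈ I, c i * g (z i)) ^ 2) :=
  stmt_16_general (IsRegular.of_ne_zero two_ne_zero).left hτmul hg I c z hz
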